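/- Let q ∈ ℂ with 0 < |q| < 1 and let a, x ∈ ℂ satisfy: a ≠ 0 and a ∉ {q^m : m ∈ ℤ} (so that (q^{1-i}/a;q)_j ≠ 0 for all i,j ∈ ℕ), and x ≠ q^{-m} for every m ∈ ℕ (so that (x;q)_k ≠ 0 for all k and (x;q)_∞ ≠ 0). Assume the family (i,j,k) ↦ (a;q)_i (q^{-j};q)_k q^{ik + jk + i(i+1)/2 + j^2 - 2ij} (-x/a)^j / ((q;q)_i (q;q)_j (q^{1-i}/a;q)_j (q;q)_k (x;q)_k) indexed by ℕ×ℕ×ℕ is absolutely summable. Then this triple sum equals (-q;q)_∞ (aq;q^2)_∞ / (x;q)_∞. -/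

import Mathlib

/-- The finite q-shifted factorial with base `Q`: `(a;Q)_n = ∏_{k=0}^{n-1} (1 - a Q^k)`. -/
noncomputable def qPoch (a q : ℂ) (n : ℕ) : ℂ := ∏ k ∈ Finset.range n, (1 - a * q ^ k)

/-- The infinite q-shifted factorial `(a;Q)_∞ = ∏_{k=0}^{∞} (1 - a Q^k)`. -/
noncomputable def qPochInf (a q : ℂ) : ℂ := ∏' k : ℕ, (1 - a * q ^ k)

/-!
The factor `(a;q)_i q^{i(i+1)/2 + j² - 2ij} (-1/a)^j / (q^{1-i}/a;q)_j` of the summand depends on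
`i - j` only, so the triple series is summed along the diagonals `i - j = n`. For fixed `i` and `j`
the sum over `k` is a terminating `₂φ₁(q^{-j}, 0; x; q, q^{i+j})`. Multiplied by `(x;q)_∞`, it is a
combination of the products `(x q^k;q)_∞`; expanding these by Euler's series and summing over `k` by
the finite q-binomial theorem turns a diagonal into a double power series in `x`, whose coefficient
of `x^{N + max(-n, 0)}` is, for `N > 0`, the `N`-th order q-difference of a polynomial of degree
less than `N`, hence zero. What remains is the case `N = 0`: the diagonals with `n < 0` contribute
nothing, and those with `n ≥ 0` leave Lebesgue's series
`∑ (a;q)_n q^{n(n+1)/2} / (q;q)_n = (-q;q)_∞ (aq;q²)_∞`, whose sum `f(a)` satisfies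
`f(a) = (1 - aq) f(aq²)`. The rearrangements need `|x| < 1`, which summability forces because the
terms with `i = j` and `k = 0` are `x^j / (q;q)_j²`.
-/

open Filter Topology Finset

section FiniteShiftedFactorial

variable {q : ℂ}

lemma qPoch_zero (a q : ℂ) : qPoch a q 0 = 1 := prod_range_zero _

lemma qPoch_succ (a q : ℂ) (n : ℕ) : qPoch a q (n + 1) = qPoch a q n * (1 - a * q ^ n) :=
  prod_range_succ _ n

lemma qPoch_add (a q : ℂ) (m n : ℕ) :
    qPoch a q (m + n) = qPoch a q m * qPoch (a * q ^ m) q n := by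
  simp only [qPoch, prod_range_add, pow_add, mul_assoc]

lemma qPoch_succ_left (a q : ℂ) (n : ℕ) :
    qPoch a q (n + 1) = (1 - a) * qPoch (a * q) q n := by
  rw [add_comm, qPoch_add, qPoch_succ, qPoch_zero, pow_zero, pow_one, mul_one, one_mul]

lemma qPoch_zero_left (q : ℂ) (n : ℕ) : qPoch 0 q n = 1 := by simp [qPoch]

lemma qPoch_ne_zero {a : ℂ} (h : ∀ k : ℕ, 1 - a * q ^ k ≠ 0) (n : ℕ) : qPoch a q n ≠ 0 :=
  prod_ne_zero_iff.2 fun k _ => h k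

lemma qPoch_zpow_neg_eq_zero (hq : q ≠ 0) {j k : ℕ} (h : j < k) :
    qPoch (q ^ (-(j : ℤ))) q k = 0 := by
  refine prod_eq_zero (mem_range.2 h) ?_
  rw [zpow_neg, zpow_natCast, inv_mul_cancel₀ (pow_ne_zero _ hq), sub_self]

lemma choose_two_succ (n : ℕ) : (n + 1).choose 2 = n.choose 2 + n := by
  rw [Nat.choose_succ_succ' n 1, Nat.choose_one_right, add_comm]

lemma qPoch_zpow_neg_mul_pow (hq : q ≠ 0) (k m : ℕ) :
    qPoch (q ^ (-((k + m : ℕ) : ℤ))) q k * q ^ ((k + m) * k) * qPoch q q m =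
      (-1) ^ k * q ^ k.choose 2 * qPoch q q (k + m) := by
  induction k generalizing m with
  | zero => simp [qPoch_zero]
  | succ k ih =>
    have hinv : q ^ (-((k + (m + 1) : ℕ) : ℤ)) * q ^ (k + (m + 1)) = 1 := by
      rw [zpow_neg, zpow_natCast]
      exact inv_mul_cancel₀ (pow_ne_zero _ hq)
    have ih := ih (m + 1)
    rw [show k + 1 + m = k + (m + 1) by ring]
    rw [qPoch_succ q q m] at ih
    rw [qPoch_succ _ q k, choose_two_succ, mul_add, mul_one]
    generalize q ^ (-((k + (m + 1) : ℕ) : ℤ)) = w at *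
    generalize qPoch w q k = P at *
    simp only [pow_add, pow_one] at hinv ih ⊢
    linear_combination (-q ^ k) * ih -
      P * q ^ ((k + (m + 1)) * k) * qPoch q q m * q ^ k * hinv

end FiniteShiftedFactorial

section InfiniteShiftedFactorial

variable {q : ℂ}

lemma one_sub_mul_pow_self_ne_zero (hq : ‖q‖ < 1) (k : ℕ) : 1 - q * q ^ k ≠ 0 := by
  intro h
  have hpow : ‖q‖ ^ (k + 1) = 1 := by
    rw [← norm_pow, pow_succ', ← sub_eq_zero.1 h, norm_one]
  exact (pow_lt_one₀ (norm_nonneg q) hq k.succ_ne_zero).ne hpow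

lemma summable_norm_neg_mul_pow (a : ℂ) (hq : ‖q‖ < 1) :
    Summable fun k : ℕ => ‖-(a * q ^ k)‖ := by
  simp only [norm_neg, norm_mul, norm_pow]
  exact (summable_geometric_of_lt_one (norm_nonneg _) hq).mul_left _

lemma tendsto_qPoch (a : ℂ) (hq : ‖q‖ < 1) :
    Tendsto (qPoch a q) atTop (𝓝 (qPochInf a q)) := by
  have h := multipliable_one_add_of_summable (summable_norm_neg_mul_pow a hq)
  simp only [← sub_eq_add_neg] at h
  exact h.tendsto_prod_tprod_nat

lemma qPochInf_ne_zero {a : ℂ} (hq : ‖q‖ < 1) (h : ∀ k : ℕ, 1 - a * q ^ k ≠ 0) :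
    qPochInf a q ≠ 0 := by
  simp only [sub_eq_add_neg, qPochInf] at h ⊢
  exact tprod_one_add_ne_zero_of_summable h (summable_norm_neg_mul_pow a hq)

lemma qPochInf_eq_qPoch_mul (a : ℂ) (hq : ‖q‖ < 1) (m : ℕ) :
    qPochInf a q = qPoch a q m * qPochInf (a * q ^ m) q := by
  have htail := (tendsto_qPoch (a * q ^ m) hq).const_mul (qPoch a q m)
  have hshift := (tendsto_add_atTop_iff_nat m).2 (tendsto_qPoch a hq)
  refine tendsto_nhds_unique hshift (htail.congr fun n => ?_)
  rw [← qPoch_add, add_comm]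

lemma norm_qPoch_le (a : ℂ) (hq : ‖q‖ < 1) (n : ℕ) :
    ‖qPoch a q n‖ ≤ Real.exp (‖a‖ * (1 - ‖q‖)⁻¹) := by
  have hgeom : ∑ k ∈ range n, ‖q‖ ^ k ≤ (1 - ‖q‖)⁻¹ := by
    rw [← tsum_geometric_of_lt_one (norm_nonneg q) hq]
    exact (summable_geometric_of_lt_one (norm_nonneg q) hq).sum_le_tsum _
      fun k _ => pow_nonneg (norm_nonneg q) k
  calc ‖qPoch a q n‖ ≤ ∏ k ∈ range n, (1 + ‖a‖ * ‖q‖ ^ k) := by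
        rw [qPoch, norm_prod]
        refine prod_le_prod (fun _ _ => norm_nonneg _) fun k _ => ?_
        simpa only [norm_one, norm_mul, norm_pow] using norm_sub_le 1 (a * q ^ k)
    _ ≤ Real.exp (∑ k ∈ range n, ‖a‖ * ‖q‖ ^ k) :=
        Real.prod_one_add_le_exp_sum _ fun k => by positivity
    _ ≤ Real.exp (‖a‖ * (1 - ‖q‖)⁻¹) := by
        rw [← mul_sum]
        gcongr

lemma exists_norm_inv_qPoch_self_le (hq : ‖q‖ < 1) :
    ∃ D : ℝ, 0 ≤ D ∧ ∀ n, ‖(qPoch q q n)⁻¹‖ ≤ D := by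
  have hlim := (tendsto_qPoch q hq).inv₀ (qPochInf_ne_zero hq (one_sub_mul_pow_self_ne_zero hq))
  obtain ⟨D, hD⟩ := hlim.norm.bddAbove_range
  exact ⟨D, (norm_nonneg _).trans (hD ⟨0, rfl⟩), fun n => hD ⟨n, rfl⟩⟩

lemma eq_qPochInf_mul_of_functional_equation {f : ℂ → ℂ} {c : ℂ} (hq : ‖q‖ < 1)
    (hcont : ContinuousAt f 0) (hf : ∀ b, f b = (1 - b * c) * f (b * q)) (b : ℂ) :
    f b = qPochInf (b * c) q * f 0 := by
  have hiter (m : ℕ) : f b = qPoch (b * c) q m * f (b * q ^ m) := by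
    induction m with
    | zero => rw [qPoch_zero, pow_zero, mul_one, one_mul]
    | succ m ih => rw [ih, hf (b * q ^ m), qPoch_succ, pow_succ]; ring_nf
  have harg : Tendsto (fun m : ℕ => b * q ^ m) atTop (𝓝 0) := by
    simpa using (tendsto_pow_atTop_nhds_zero_of_norm_lt_one hq).const_mul b
  have hlim := (tendsto_qPoch (b * c) hq).mul (hcont.tendsto.comp harg)
  exact tendsto_nhds_unique tendsto_const_nhds (hlim.congr fun m => (hiter m).symm)

end InfiniteShiftedFactorial

section EulerTerm

variable {q : ℂ}

/-- The `n`-th term `(-1)^n q^{n(n-1)/2} z^n / (q;q)_n` of Euler's series for `(z;q)_∞`. -/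
noncomputable def eulerTerm (z q : ℂ) (n : ℕ) : ℂ :=
  (-1) ^ n * q ^ n.choose 2 * z ^ n / qPoch q q n

lemma eulerTerm_zero (z q : ℂ) : eulerTerm z q 0 = 1 := by simp [eulerTerm, qPoch_zero]

lemma eulerTerm_mul_pow (z y q : ℂ) (n : ℕ) :
    eulerTerm z q n * y ^ n = eulerTerm (z * y) q n := by
  rw [eulerTerm, eulerTerm, mul_pow]
  ring

lemma one_sub_mul_eulerTerm_succ (hq : ∀ k : ℕ, 1 - q * q ^ k ≠ 0) (z : ℂ) (n : ℕ) :
    (1 - q ^ (n + 1)) * eulerTerm z q (n + 1) = -z * (q ^ n * eulerTerm z q n) := by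
  have hn := qPoch_ne_zero hq n
  have hn' := hq n
  rw [eulerTerm, eulerTerm, qPoch_succ, choose_two_succ, pow_succ' q n]
  field_simp
  ring

lemma sum_antidiagonal_eulerTerm_div (hq : ∀ k : ℕ, 1 - q * q ^ k ≠ 0) (z : ℂ) (n : ℕ) :
    ∑ c ∈ antidiagonal n, eulerTerm z q c.1 / qPoch q q c.2 = qPoch z q n / qPoch q q n := by
  induction n with
  | zero => simp [eulerTerm_zero, qPoch_zero]
  | succ n ih =>
    have hleft : ∑ c ∈ antidiagonal (n + 1),
        (1 - q ^ c.1) * eulerTerm z q c.1 * q ^ c.2 / qPoch q q c.2 =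
          -z * q ^ n * ∑ c ∈ antidiagonal n, eulerTerm z q c.1 / qPoch q q c.2 := by
      rw [Nat.sum_antidiagonal_succ, mul_sum, pow_zero, sub_self, zero_mul, zero_mul, zero_div,
        zero_add]
      refine sum_congr rfl fun c hc => ?_
      rw [one_sub_mul_eulerTerm_succ hq, ← mem_antidiagonal.1 hc, pow_add]
      ring
    have hright : ∑ c ∈ antidiagonal (n + 1),
        eulerTerm z q c.1 * (1 - q ^ c.2) / qPoch q q c.2 =
          ∑ c ∈ antidiagonal n, eulerTerm z q c.1 / qPoch q q c.2 := by
      rw [Nat.sum_antidiagonal_succ', pow_zero, sub_self, mul_zero, zero_div, zero_add]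
      refine sum_congr rfl fun c _ => ?_
      rw [qPoch_succ, pow_succ', mul_div_mul_right _ _ (hq c.2)]
    -- `1 - q^{k+m} = (1 - q^k) q^m + (1 - q^m)` with `k + m = n + 1`
    have hsplit : (1 - q ^ (n + 1)) *
        ∑ c ∈ antidiagonal (n + 1), eulerTerm z q c.1 / qPoch q q c.2 =
          (1 - z * q ^ n) * ∑ c ∈ antidiagonal n, eulerTerm z q c.1 / qPoch q q c.2 := by
      rw [sub_eq_add_neg 1 (z * q ^ n), add_mul, one_mul, ← neg_mul, ← hleft, ← hright,
        ← sum_add_distrib, mul_sum]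
      refine sum_congr rfl fun c hc => ?_
      rw [← mem_antidiagonal.1 hc, pow_add]
      ring
    have hn : 1 - q ^ (n + 1) ≠ 0 := pow_succ' q n ▸ hq n
    rw [← mul_right_inj' hn, hsplit, ih, qPoch_succ, qPoch_succ, ← pow_succ']
    field_simp

-- The sum is a q-difference operator of order `N`, applied to a polynomial of degree `m + n` in
-- `q ^ d.2`.
lemma sum_antidiagonal_eulerTerm_mul_qPoch_eq_zero (hq0 : q ≠ 0)
    (hq : ∀ k : ℕ, 1 - q * q ^ k ≠ 0) (c : ℂ) {m n N : ℕ} (h : m + n < N) :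
    ∑ d ∈ antidiagonal N,
      eulerTerm 1 q d.1 * (q ^ d.2) ^ m * qPoch (c * q ^ d.2) q n / qPoch q q d.2 = 0 := by
  induction n generalizing m with
  | zero =>
    calc _ = (q ^ N) ^ m *
          ∑ d ∈ antidiagonal N, eulerTerm (q ^ (-(m : ℤ))) q d.1 / qPoch q q d.2 := by
          rw [mul_sum]
          refine sum_congr rfl fun d hd => ?_
          have hinv : (q ^ d.1) ^ m * (q ^ (-(m : ℤ))) ^ d.1 = 1 := by
            rw [zpow_neg, zpow_natCast, inv_pow, pow_right_comm,
              mul_inv_cancel₀ (pow_ne_zero _ (pow_ne_zero _ hq0))]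
          rw [← one_mul (q ^ (-(m : ℤ))), ← eulerTerm_mul_pow, ← mem_antidiagonal.1 hd, pow_add,
            mul_pow, qPoch_zero]
          linear_combination -(q ^ d.2) ^ m * eulerTerm 1 q d.1 / qPoch q q d.2 * hinv
      _ = 0 := by
          rw [sum_antidiagonal_eulerTerm_div hq, qPoch_zpow_neg_eq_zero hq0 (by omega), zero_div,
            mul_zero]
  | succ n ih =>
    have hlow := ih (m := m) (by omega)
    have hhigh := ih (m := m + 1) (by omega)
    have hsum := congrArg₂ (fun u v => u - c * q ^ n * v) hlow hhigh
    rw [mul_zero, sub_zero, mul_sum, ← sum_sub_distrib] at hsum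
    rw [← hsum]
    refine sum_congr rfl fun d _ => ?_
    rw [qPoch_succ, pow_succ (q ^ d.2)]
    ring

lemma summable_norm_eulerTerm (hq : ‖q‖ < 1) (z : ℂ) :
    Summable fun n => ‖eulerTerm z q n‖ := by
  have hratio : Tendsto (fun n : ℕ => ‖-z * q ^ n / (1 - q * q ^ n)‖) atTop (𝓝 0) := by
    have hpow := tendsto_pow_atTop_nhds_zero_of_norm_lt_one hq
    simpa using ((hpow.const_mul (-z)).div ((hpow.const_mul q).const_sub 1) (by simp)).norm
  refine summable_of_ratio_norm_eventually_le one_half_lt_one ?_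
  filter_upwards [hratio.eventually_le_const one_half_pos] with n hn
  have hne := one_sub_mul_pow_self_ne_zero hq
  have hsucc : eulerTerm z q (n + 1) = -z * q ^ n / (1 - q * q ^ n) * eulerTerm z q n := by
    rw [div_mul_eq_mul_div, eq_div_iff (hne n), mul_comm, ← pow_succ',
      one_sub_mul_eulerTerm_succ hne, mul_assoc]
  rw [norm_norm, norm_norm, hsucc, norm_mul]
  gcongr

lemma norm_eulerTerm_le {z w : ℂ} (h : ‖z‖ ≤ ‖w‖) (q : ℂ) (n : ℕ) :
    ‖eulerTerm z q n‖ ≤ ‖eulerTerm w q n‖ := by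
  simp only [eulerTerm, norm_div, norm_mul, norm_pow]
  gcongr

end EulerTerm

section PhiOneOne

variable {q : ℂ}

/-- The basic hypergeometric series `₁φ₁(b; 0; q, z) = ∑ (b;q)_n (-1)^n q^{n(n-1)/2} z^n / (q;q)_n`,
which contains both Euler's series (`b = 0`) and Lebesgue's (`z = -q`). -/
noncomputable def phiOneOne (b z q : ℂ) : ℂ := ∑' n, qPoch b q n * eulerTerm z q n

lemma norm_qPoch_mul_eulerTerm_le {b z w : ℂ} {R : ℝ} (hq : ‖q‖ < 1) (hb : ‖b‖ ≤ R)
    (hz : ‖z‖ ≤ ‖w‖) (n : ℕ) :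
    ‖qPoch b q n * eulerTerm z q n‖ ≤ Real.exp (R * (1 - ‖q‖)⁻¹) * ‖eulerTerm w q n‖ := by
  rw [norm_mul]
  gcongr
  · exact (norm_qPoch_le b hq n).trans (by gcongr)
  · exact norm_eulerTerm_le hz q n

lemma summable_qPoch_mul_eulerTerm (hq : ‖q‖ < 1) (b z : ℂ) :
    Summable fun n => qPoch b q n * eulerTerm z q n :=
  .of_norm_bounded ((summable_norm_eulerTerm hq z).mul_left _)
    (norm_qPoch_mul_eulerTerm_le hq le_rfl le_rfl)

lemma continuous_phiOneOne (hq : ‖q‖ < 1) :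
    Continuous fun p : ℂ × ℂ => phiOneOne p.1 p.2 q := by
  refine continuous_iff_continuousAt.2 fun p => ?_
  set R : ℝ := ‖p‖ + 1
  have hR : ‖(R : ℂ)‖ = R := Complex.norm_of_nonneg (by positivity)
  have hon : ContinuousOn (fun p : ℂ × ℂ => phiOneOne p.1 p.2 q) (Metric.ball 0 R) := by
    refine continuousOn_tsum (fun n => Continuous.continuousOn ?_)
      ((summable_norm_eulerTerm hq R).mul_left (Real.exp (R * (1 - ‖q‖)⁻¹))) fun n x hx => ?_
    · unfold qPoch eulerTerm
      fun_prop
    · have hx : ‖x‖ ≤ R := (mem_ball_zero_iff.1 hx).le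
      exact norm_qPoch_mul_eulerTerm_le hq ((norm_fst_le x).trans hx)
        (((norm_snd_le x).trans hx).trans_eq hR.symm) n
  exact hon.continuousAt (Metric.isOpen_ball.mem_nhds (mem_ball_zero_iff.2 (lt_add_one ‖p‖)))

lemma phiOneOne_zero_right (b q : ℂ) : phiOneOne b 0 q = 1 := by
  rw [phiOneOne, tsum_eq_single 0 fun n hn => by simp [eulerTerm, hn], qPoch_zero, eulerTerm_zero,
    mul_one]

lemma phiOneOne_zero_left_eq_mul (hq : ‖q‖ < 1) (z : ℂ) :
    phiOneOne 0 z q = (1 - z) * phiOneOne 0 (z * q) q := by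
  have hs := summable_qPoch_mul_eulerTerm hq 0
  have hdiff : phiOneOne 0 z q - phiOneOne 0 (z * q) q = -z * phiOneOne 0 (z * q) q := by
    rw [phiOneOne, phiOneOne, ← (hs z).tsum_sub (hs (z * q)),
      ((hs z).sub (hs (z * q))).tsum_eq_zero_add, ← tsum_mul_left]
    simp only [qPoch_zero_left, eulerTerm_zero, sub_self, zero_add, one_mul]
    refine tsum_congr fun n => ?_
    have hsucc := one_sub_mul_eulerTerm_succ (one_sub_mul_pow_self_ne_zero hq) z n
    rw [← eulerTerm_mul_pow, ← eulerTerm_mul_pow]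
    linear_combination hsucc
  linear_combination hdiff

theorem hasSum_eulerTerm (hq : ‖q‖ < 1) (z : ℂ) : HasSum (eulerTerm z q) (qPochInf z q) := by
  have hcont : Continuous fun z => phiOneOne 0 z q :=
    (continuous_phiOneOne hq).comp₂ continuous_const continuous_id
  have hstep (z : ℂ) : phiOneOne 0 z q = (1 - z * 1) * phiOneOne 0 (z * q) q := by
    rw [mul_one, ← phiOneOne_zero_left_eq_mul hq]
  have hsum := eq_qPochInf_mul_of_functional_equation hq hcont.continuousAt hstep z
  rw [mul_one, phiOneOne_zero_right, mul_one] at hsum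
  rw [← hsum]
  simpa only [phiOneOne, qPoch_zero_left, one_mul] using
    (summable_qPoch_mul_eulerTerm hq 0 z).hasSum

lemma phiOneOne_sub_phiOneOne_mul_left (hq : ‖q‖ < 1) (b z : ℂ) :
    phiOneOne b z q - phiOneOne (b * q) z q = b * z * phiOneOne (b * q) (z * q) q := by
  have hs := fun b => summable_qPoch_mul_eulerTerm hq b z
  rw [phiOneOne, phiOneOne, phiOneOne, ← (hs b).tsum_sub (hs (b * q)),
    ((hs b).sub (hs (b * q))).tsum_eq_zero_add, ← tsum_mul_left]
  simp only [qPoch_zero, sub_self, zero_add]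
  refine tsum_congr fun n => ?_
  have hsucc := one_sub_mul_eulerTerm_succ (one_sub_mul_pow_self_ne_zero hq) z n
  rw [qPoch_succ_left b, qPoch_succ (b * q), ← eulerTerm_mul_pow]
  linear_combination (-b * qPoch (b * q) q n) * hsucc

lemma phiOneOne_sub_mul_phiOneOne (hq : ‖q‖ < 1) (b z : ℂ) :
    phiOneOne b z q - b * phiOneOne b (z * q) q = (1 - b) * phiOneOne (b * q) z q := by
  have hs := summable_qPoch_mul_eulerTerm hq b
  rw [phiOneOne, phiOneOne, phiOneOne, ← tsum_mul_left, ← tsum_mul_left,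
    ← (hs z).tsum_sub ((hs (z * q)).mul_left b)]
  refine tsum_congr fun n => ?_
  rw [← eulerTerm_mul_pow]
  linear_combination eulerTerm z q n * ((qPoch_succ b q n).symm.trans (qPoch_succ_left b q n))

theorem phiOneOne_neg_self (hq : ‖q‖ < 1) (b : ℂ) :
    phiOneOne b (-q) q = qPochInf (-q) q * qPochInf (b * q) (q ^ 2) := by
  have hq2 : ‖q ^ 2‖ < 1 := by
    rw [norm_pow]
    exact pow_lt_one₀ (norm_nonneg q) hq two_ne_zero
  have hcont : Continuous fun b => phiOneOne b (-q) q :=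
    (continuous_phiOneOne hq).comp₂ continuous_id continuous_const
  have hstep (b : ℂ) : phiOneOne b (-q) q = (1 - b * q) * phiOneOne (b * q ^ 2) (-q) q := by
    have hfirst := phiOneOne_sub_phiOneOne_mul_left hq b (-q)
    have hsecond := phiOneOne_sub_mul_phiOneOne hq (b * q) (-q)
    rw [mul_assoc b q q, ← sq] at hsecond
    linear_combination hfirst + hsecond
  have hzero : phiOneOne 0 (-q) q = qPochInf (-q) q := by
    simpa only [phiOneOne, qPoch_zero_left, one_mul] using (hasSum_eulerTerm hq (-q)).tsum_eq
  rw [eq_qPochInf_mul_of_functional_equation hq2 hcont.continuousAt hstep, hzero, mul_comm]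

end PhiOneOne

section DiagonalSum

variable {q : ℂ}

lemma tsum_prod_eq_tsum_sum_antidiagonal {A α : Type*} [AddCommMonoid A] [HasAntidiagonal A]
    [AddCommMonoid α] [TopologicalSpace α] [ContinuousAdd α] [T3Space α] {f : A × A → α}
    (hf : Summable f) : ∑' c, f c = ∑' n, ∑ c ∈ antidiagonal n, f c := by
  have hsigma := HasAntidiagonal.sigmaAntidiagonalEquivProd.summable_iff.2 hf
  calc ∑' c, f c = ∑' c, f (HasAntidiagonal.sigmaAntidiagonalEquivProd c) :=
        (Equiv.tsum_eq _ f).symm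
    _ = ∑' n : A, ∑' c : antidiagonal n, f (c : A × A) :=
        hsigma.tsum_sigma' fun n => (hasSum_fintype _).summable
    _ = ∑' n, ∑ c ∈ antidiagonal n, f c :=
        tsum_congr fun n => (tsum_fintype _).trans (sum_coe_sort (antidiagonal n) f)

/-- The terminating series `₂φ₁(q^{-j}, 0; x; q, q^j y) / (q;q)_j`, with the quotient
`(q^{-j};q)_k q^{jk} / (q;q)_j` written as `(-1)^k q^{k(k-1)/2} / (q;q)_{j-k}`. -/
noncomputable def terminatingPhi (y x q : ℂ) (j : ℕ) : ℂ :=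
  ∑ c ∈ antidiagonal j, eulerTerm y q c.1 / (qPoch q q c.2 * qPoch x q c.1)

lemma hasSum_eulerTerm_mul_qPoch_div {x : ℂ} (hq : ‖q‖ < 1) (hx : ∀ k : ℕ, 1 - x * q ^ k ≠ 0)
    (y : ℂ) (j : ℕ) :
    HasSum (fun r => eulerTerm x q r * (qPoch (y * q ^ r) q j / qPoch q q j))
      (qPochInf x q * terminatingPhi y x q j) := by
  have hterm (c : ℕ × ℕ) := (hasSum_eulerTerm hq (x * q ^ c.1)).mul_left
    (eulerTerm y q c.1 / qPoch q q c.2)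
  have hexpand (r : ℕ) : eulerTerm x q r * (qPoch (y * q ^ r) q j / qPoch q q j) =
      ∑ c ∈ antidiagonal j, eulerTerm y q c.1 / qPoch q q c.2 * eulerTerm (x * q ^ c.1) q r := by
    rw [← sum_antidiagonal_eulerTerm_div (one_sub_mul_pow_self_ne_zero hq), mul_sum]
    refine sum_congr rfl fun c _ => ?_
    rw [← eulerTerm_mul_pow x, ← eulerTerm_mul_pow y, pow_right_comm]
    ring
  have hvalue : qPochInf x q * terminatingPhi y x q j =
      ∑ c ∈ antidiagonal j, eulerTerm y q c.1 / qPoch q q c.2 * qPochInf (x * q ^ c.1) q := by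
    rw [terminatingPhi, mul_sum]
    refine sum_congr rfl fun c _ => ?_
    have hxc := qPoch_ne_zero hx c.1
    rw [qPochInf_eq_qPoch_mul x hq c.1]
    field_simp
  rw [funext hexpand, hvalue]
  exact hasSum_sum fun c _ => hterm c

/-- The double series obtained from `∑ x^j ₂φ₁(q^{-j}, 0; x; q, q^{i+j}) / ((q;q)_i (q;q)_j)` along
the diagonal `(i, j) = (l + s, l + p)` by expanding `(x q^k;q)_∞` in Euler's series over `r`. -/
noncomputable def diagonalTerm (x q : ℂ) (s p r l : ℕ) : ℂ :=
  x ^ (l + p) / qPoch q q (l + s) *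
    (eulerTerm x q r * (qPoch (q ^ (l + s) * q ^ r) q (l + p) / qPoch q q (l + p)))

lemma qPoch_mul_qPoch_of_eq_zero_or {s p : ℕ} (hsp : s = 0 ∨ p = 0) (a q : ℂ) (l : ℕ) :
    qPoch a q (l + s) * qPoch a q (l + p) = qPoch a q l * qPoch a q (l + (s + p)) := by
  rcases hsp with rfl | rfl
  · rw [add_zero, zero_add]
  · rw [add_zero, add_zero, mul_comm]

lemma diagonalTerm_of_add_eq_succ (hq : ∀ k : ℕ, 1 - q * q ^ k ≠ 0) {s p : ℕ}
    (hsp : s = 0 ∨ p = 0) (x : ℂ) {r l n : ℕ} (h : r + l = n + 1) :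
    diagonalTerm x q s p r l = x ^ (n + 1 + p) / qPoch q q (n + s) *
      (eulerTerm 1 q r * (q ^ l) ^ 0 * qPoch (q ^ (s + p + 1) * q ^ l) q n / qPoch q q l) := by
  have hne := qPoch_ne_zero hq
  have hbase : q ^ (l + s) * q ^ r = q * q ^ (n + s) := by
    rw [← pow_add, ← pow_succ']
    congr 1
    omega
  have hprod : qPoch q q (n + s) * qPoch (q ^ (l + s) * q ^ r) q (l + p) =
      qPoch q q (l + (s + p)) * qPoch (q ^ (s + p + 1) * q ^ l) q n := by
    rw [hbase, ← qPoch_add, show q ^ (s + p + 1) * q ^ l = q * q ^ (l + (s + p)) by ring,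
      ← qPoch_add]
    congr 1
    omega
  have hden := qPoch_mul_qPoch_of_eq_zero_or hsp q q l
  have hl := hne l
  have hls := hne (l + s)
  have hlp := hne (l + p)
  have hns := hne (n + s)
  rw [diagonalTerm, ← one_mul x, ← eulerTerm_mul_pow, one_mul, ← h, pow_zero, pow_add x (r + l),
    pow_add x r, pow_add x l]
  field_simp
  refine mul_right_cancel₀ (hne (l + (s + p))) ?_
  linear_combination (x ^ l * x ^ p * x ^ r * eulerTerm 1 q r) *
    (qPoch q q l * qPoch q q (l + (s + p)) * hprod -
      qPoch q q (l + (s + p)) * qPoch (q ^ (s + p + 1) * q ^ l) q n * hden)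

lemma diagonalTerm_zero_zero {s p : ℕ} (hsp : s = 0 ∨ p = 0) (x q : ℂ) :
    diagonalTerm x q s p 0 0 = if p = 0 then (qPoch q q s)⁻¹ else 0 := by
  rw [diagonalTerm, eulerTerm_zero]
  rcases p with _ | p
  · simp [qPoch_zero]
  · obtain rfl : s = 0 := by omega
    simp [qPoch_succ_left]

lemma sum_antidiagonal_diagonalTerm_succ (hq0 : q ≠ 0) (hq : ∀ k : ℕ, 1 - q * q ^ k ≠ 0)
    {s p : ℕ} (hsp : s = 0 ∨ p = 0) (x : ℂ) (n : ℕ) :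
    ∑ c ∈ antidiagonal (n + 1), diagonalTerm x q s p c.1 c.2 = 0 := by
  rw [sum_congr rfl fun c hc => diagonalTerm_of_add_eq_succ hq hsp x (mem_antidiagonal.1 hc),
    ← mul_sum, sum_antidiagonal_eulerTerm_mul_qPoch_eq_zero hq0 hq _ (by omega), mul_zero]

lemma summable_diagonalTerm {x : ℂ} (hq : ‖q‖ < 1) (hx : ‖x‖ < 1) (s p : ℕ) :
    Summable fun c : ℕ × ℕ => diagonalTerm x q s p c.1 c.2 := by
  obtain ⟨D, hD0, hD⟩ := exists_norm_inv_qPoch_self_le hq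
  set B := Real.exp (1 * (1 - ‖q‖)⁻¹)
  have hB (n j : ℕ) : ‖qPoch (q ^ n) q j‖ ≤ B := by
    refine (norm_qPoch_le _ hq j).trans (Real.exp_le_exp.2 ?_)
    have hqn : ‖q ^ n‖ ≤ 1 := (norm_pow q n).trans_le (pow_le_one₀ (norm_nonneg q) hq.le)
    gcongr
  have hmajorant := (((summable_norm_eulerTerm hq x).mul_of_nonneg
    (summable_geometric_of_lt_one (norm_nonneg x) hx) (fun _ => norm_nonneg _)
    fun _ => by positivity).mul_right (‖x‖ ^ p * D * B * D))
  refine .of_norm_bounded hmajorant fun ⟨r, l⟩ => ?_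
  calc ‖diagonalTerm x q s p r l‖
      = ‖x‖ ^ (l + p) * ‖(qPoch q q (l + s))⁻¹‖ * (‖eulerTerm x q r‖ *
          (‖qPoch (q ^ (l + s + r)) q (l + p)‖ * ‖(qPoch q q (l + p))⁻¹‖)) := by
        simp only [diagonalTerm, div_eq_mul_inv, norm_mul, norm_pow, ← pow_add]
    _ ≤ ‖x‖ ^ (l + p) * D * (‖eulerTerm x q r‖ * (B * D)) := by
        gcongr
        · exact hD _
        · exact hB _ _
        · exact hD _
    _ = ‖eulerTerm x q r‖ * ‖x‖ ^ l * (‖x‖ ^ p * D * B * D) := by ring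

theorem tsum_diagonal_terminatingPhi {x : ℂ} (hq0 : q ≠ 0) (hq : ‖q‖ < 1) (hx1 : ‖x‖ < 1)
    (hx : ∀ k : ℕ, 1 - x * q ^ k ≠ 0) {s p : ℕ} (hsp : s = 0 ∨ p = 0) :
    ∑' l, x ^ (l + p) / qPoch q q (l + s) * terminatingPhi (q ^ (l + s)) x q (l + p) =
      if p = 0 then (qPoch q q s)⁻¹ / qPochInf x q else 0 := by
  have hsum := summable_diagonalTerm hq hx1 s p
  have hrow (l : ℕ) : ∑' r, diagonalTerm x q s p r l = qPochInf x q *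
      (x ^ (l + p) / qPoch q q (l + s) * terminatingPhi (q ^ (l + s)) x q (l + p)) := by
    rw [mul_left_comm]
    exact ((hasSum_eulerTerm_mul_qPoch_div hq hx _ _).mul_left _).tsum_eq
  have htotal : ∑' l, ∑' r, diagonalTerm x q s p r l =
      if p = 0 then (qPoch q q s)⁻¹ else 0 := by
    calc ∑' l, ∑' r, diagonalTerm x q s p r l
        = ∑' r, ∑' l, diagonalTerm x q s p r l :=
          Summable.tsum_comm (f := diagonalTerm x q s p) hsum
      _ = ∑' c : ℕ × ℕ, diagonalTerm x q s p c.1 c.2 := hsum.tsum_prod.symm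
      _ = ∑' n, ∑ c ∈ antidiagonal n, diagonalTerm x q s p c.1 c.2 :=
          tsum_prod_eq_tsum_sum_antidiagonal hsum
      _ = ∑ c ∈ antidiagonal 0, diagonalTerm x q s p c.1 c.2 :=
          tsum_eq_single 0 fun n hn => by
            obtain ⟨n, rfl⟩ := Nat.exists_eq_succ_of_ne_zero hn
            exact sum_antidiagonal_diagonalTerm_succ hq0 (one_sub_mul_pow_self_ne_zero hq) hsp x n
      _ = if p = 0 then (qPoch q q s)⁻¹ else 0 := by
          rw [Nat.antidiagonal_zero, sum_singleton, diagonalTerm_zero_zero hsp]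
  rw [tsum_congr hrow, tsum_mul_left, mul_comm] at htotal
  rw [eq_div_of_mul_eq (qPochInf_ne_zero hq hx) htotal, ite_div, zero_div]

end DiagonalSum

section TripleSeries

variable {q : ℂ}

/-- The summand of the triple series. -/
noncomputable def tripleTerm (q a x : ℂ) (i j k : ℕ) : ℂ :=
  qPoch a q i * qPoch (q ^ (-(j : ℤ))) q k *
    q ^ ((i : ℤ) * (k : ℤ) + (j : ℤ) * (k : ℤ) + (i : ℤ) * ((i : ℤ) + 1) / 2 + (j : ℤ) ^ 2 -
      2 * (i : ℤ) * (j : ℤ)) * (-x / a) ^ j /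
    (qPoch q q i * qPoch q q j * qPoch (q ^ ((1 : ℤ) - (i : ℤ)) / a) q j * qPoch q q k *
      qPoch x q k)

/-- The part of `tripleTerm` that involves `a`; it depends on `i - j` only. -/
noncomputable def diagonalCoeff (a q : ℂ) (i j : ℕ) : ℂ :=
  qPoch a q i * q ^ (((i + 1).choose 2 : ℤ) + (j : ℤ) ^ 2 - 2 * (i : ℤ) * (j : ℤ)) *
    (-1 / a) ^ j / qPoch (q ^ ((1 : ℤ) - (i : ℤ)) / a) q j

lemma diagonalCoeff_zero_right (a q : ℂ) (i : ℕ) :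
    diagonalCoeff a q i 0 = qPoch a q i * q ^ (i + 1).choose 2 := by
  simp [diagonalCoeff, qPoch_zero, ← zpow_natCast]

lemma diagonalCoeff_succ_succ {a : ℂ} (hq : q ≠ 0) (ha : a ≠ 0) (haq : ∀ m : ℤ, a ≠ q ^ m)
    (i j : ℕ) : diagonalCoeff a q (i + 1) (j + 1) = diagonalCoeff a q i j := by
  have hbase : q ^ ((1 : ℤ) - ((i + 1 : ℕ) : ℤ)) = (q ^ i)⁻¹ := by
    rw [← zpow_natCast, ← zpow_neg]
    congr 1
    push_cast
    ring
  have hshift : (q ^ i)⁻¹ / a * q = q ^ ((1 : ℤ) - (i : ℤ)) / a := by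
    rw [zpow_sub₀ hq, zpow_one, zpow_natCast]
    ring
  have hexp : ((i + 1 + 1).choose 2 : ℤ) + ((j + 1 : ℕ) : ℤ) ^ 2 -
      2 * ((i + 1 : ℕ) : ℤ) * ((j + 1 : ℕ) : ℤ) =
        ((i + 1).choose 2 : ℤ) + (j : ℤ) ^ 2 - 2 * (i : ℤ) * (j : ℤ) + (-(i : ℤ)) := by
    rw [choose_two_succ (i + 1)]
    push_cast
    ring
  have hfactor : 1 - (q ^ i)⁻¹ / a ≠ 0 := fun h => haq (-(i : ℤ)) <| by
    rw [zpow_neg, zpow_natCast, ← (div_eq_one_iff_eq ha).1 (sub_eq_zero.1 h).symm]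
  have hcancel : (1 - a * q ^ i) * (q ^ i)⁻¹ * (-1 / a) = 1 - (q ^ i)⁻¹ / a := by
    field_simp
    ring
  rw [diagonalCoeff, diagonalCoeff, hbase, hexp, qPoch_succ, qPoch_succ_left, hshift,
    zpow_add₀ hq, zpow_neg, zpow_natCast, pow_succ (-1 / a),
    ← mul_div_mul_left _ (qPoch (q ^ ((1 : ℤ) - (i : ℤ)) / a) q j) hfactor]
  congr 1
  linear_combination (qPoch a q i *
    q ^ (((i + 1).choose 2 : ℤ) + (j : ℤ) ^ 2 - 2 * (i : ℤ) * (j : ℤ)) * (-1 / a) ^ j) * hcancel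

lemma diagonalCoeff_add_add {a : ℂ} (hq : q ≠ 0) (ha : a ≠ 0) (haq : ∀ m : ℤ, a ≠ q ^ m)
    (s p l : ℕ) : diagonalCoeff a q (l + s) (l + p) = diagonalCoeff a q s p := by
  induction l with
  | zero => rw [zero_add, zero_add]
  | succ l ih =>
    rw [← ih, ← diagonalCoeff_succ_succ hq ha haq (l + s) (l + p), add_right_comm l 1 s,
      add_right_comm l 1 p]

lemma diagonalCoeff_zero_right_div (a q : ℂ) (n : ℕ) :
    diagonalCoeff a q n 0 / qPoch q q n = qPoch a q n * eulerTerm (-q) q n := by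
  have hsign : (-1 : ℂ) ^ n * (-q) ^ n = q ^ n := by
    rw [← mul_pow, neg_one_mul, neg_neg]
  rw [diagonalCoeff_zero_right, eulerTerm, mul_right_comm ((-1 : ℂ) ^ n), hsign, choose_two_succ,
    pow_add]
  ring

lemma tripleTerm_add_left (hq0 : q ≠ 0) (hq : ∀ k : ℕ, 1 - q * q ^ k ≠ 0) (a x : ℂ)
    (i k m : ℕ) :
    tripleTerm q a x i (k + m) k = diagonalCoeff a q i (k + m) * (x ^ (k + m) / qPoch q q i *
      (eulerTerm (q ^ i) q k / (qPoch q q m * qPoch x q k))) := by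
  have htriangle : (i : ℤ) * ((i : ℤ) + 1) / 2 = ((i + 1).choose 2 : ℤ) := by
    rw [Nat.choose_two_right, Nat.add_sub_cancel, mul_comm]
    push_cast
    rfl
  have hexp : (i : ℤ) * (k : ℤ) + ((k + m : ℕ) : ℤ) * (k : ℤ) + ((i + 1).choose 2 : ℤ) +
      ((k + m : ℕ) : ℤ) ^ 2 - 2 * (i : ℤ) * ((k + m : ℕ) : ℤ) =
        ((i * k : ℕ) : ℤ) + (((k + m) * k : ℕ) : ℤ) +
          (((i + 1).choose 2 : ℤ) + ((k + m : ℕ) : ℤ) ^ 2 - 2 * (i : ℤ) * ((k + m : ℕ) : ℤ)) := by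
    push_cast
    ring
  have hkm := qPoch_ne_zero hq (k + m)
  have hm := qPoch_ne_zero hq m
  have hneg : qPoch (q ^ (-((k + m : ℕ) : ℤ))) q k * q ^ ((k + m) * k) / qPoch q q (k + m) =
      (-1) ^ k * q ^ k.choose 2 / qPoch q q m :=
    (div_eq_div_iff hkm hm).2 (qPoch_zpow_neg_mul_pow hq0 k m)
  rw [tripleTerm, diagonalCoeff, eulerTerm, htriangle, hexp, zpow_add₀ hq0, zpow_add₀ hq0,
    zpow_natCast, zpow_natCast, pow_mul q i k, show -x / a = x * (-1 / a) by ring, mul_pow x]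
  generalize q ^ (((i + 1).choose 2 : ℤ) + ((k + m : ℕ) : ℤ) ^ 2 - 2 * (i : ℤ) * ((k + m : ℕ) : ℤ))
    = w
  linear_combination (qPoch a q i * w * (-1 / a) ^ (k + m) * x ^ (k + m) * (q ^ i) ^ k /
    (qPoch (q ^ ((1 : ℤ) - (i : ℤ)) / a) q (k + m) * qPoch q q i * qPoch q q k * qPoch x q k)) *
      hneg

lemma tsum_tripleTerm (hq0 : q ≠ 0) (hq : ∀ k : ℕ, 1 - q * q ^ k ≠ 0) (a x : ℂ) (i j : ℕ) :
    ∑' k, tripleTerm q a x i j k =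
      diagonalCoeff a q i j * (x ^ j / qPoch q q i * terminatingPhi (q ^ i) x q j) := by
  have hvanish (k : ℕ) (hk : k ∉ range (j + 1)) : tripleTerm q a x i j k = 0 := by
    have hjk : j < k := by simpa using hk
    rw [tripleTerm, qPoch_zpow_neg_eq_zero hq0 hjk]
    simp only [mul_zero, zero_mul, zero_div]
  rw [tsum_eq_sum hvanish, terminatingPhi, mul_sum, mul_sum,
    ← Nat.sum_antidiagonal_eq_sum_range_succ_mk fun c => tripleTerm q a x i j c.1]
  refine sum_congr rfl fun c hc => ?_
  rw [← mem_antidiagonal.1 hc, tripleTerm_add_left hq0 hq]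

lemma norm_lt_one_of_summable_tripleTerm {a x : ℂ} (hq0 : q ≠ 0) (hq : ‖q‖ < 1) (ha : a ≠ 0)
    (haq : ∀ m : ℤ, a ≠ q ^ m)
    (hs : Summable fun t : ℕ × ℕ × ℕ => tripleTerm q a x t.1 t.2.1 t.2.2) : ‖x‖ < 1 := by
  have hne := one_sub_mul_pow_self_ne_zero hq
  have hdiag (l : ℕ) : tripleTerm q a x l l 0 * (qPoch q q l * qPoch q q l) = x ^ l := by
    have hl := qPoch_ne_zero hne l
    have hcoeff : diagonalCoeff a q l l = 1 := by
      rw [← add_zero l, diagonalCoeff_add_add hq0 ha haq, diagonalCoeff_zero_right]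
      simp [qPoch_zero]
    have hterm := tripleTerm_add_left hq0 hne a x l 0 l
    rw [zero_add, hcoeff, eulerTerm_zero, qPoch_zero] at hterm
    rw [hterm]
    field_simp
  have hinj : Function.Injective fun l : ℕ => (l, l, 0) := fun l m h => (Prod.ext_iff.1 h).1
  have hterm := (hs.comp_injective hinj).tendsto_atTop_zero
  have hqq := tendsto_qPoch q hq
  have hpow := (hterm.mul (hqq.mul hqq)).congr hdiag
  rwa [zero_mul, tendsto_pow_atTop_nhds_zero_iff_norm_lt_one] at hpow

/-- The parametrisation of `ℕ × ℕ` by the difference `n = i - j` and the minimum of the two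
coordinates. -/
def diagonalEquiv : ℤ × ℕ ≃ ℕ × ℕ where
  toFun c := (c.2 + c.1.toNat, c.2 + (-c.1).toNat)
  invFun d := ((d.1 : ℤ) - d.2, min d.1 d.2)
  left_inv := by
    rintro ⟨n, l⟩
    simp only [Prod.mk.injEq]
    omega
  right_inv := by
    rintro ⟨i, j⟩
    simp only [Prod.mk.injEq]
    omega

theorem tsum_diagonal_tripleTerm {a x : ℂ} (hq0 : q ≠ 0) (hq : ‖q‖ < 1) (ha : a ≠ 0)
    (haq : ∀ m : ℤ, a ≠ q ^ m) (hx1 : ‖x‖ < 1) (hx : ∀ k : ℕ, 1 - x * q ^ k ≠ 0) {s p : ℕ}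
    (hsp : s = 0 ∨ p = 0) :
    ∑' l, ∑' k, tripleTerm q a x (l + s) (l + p) k =
      if p = 0 then qPoch a q s * eulerTerm (-q) q s / qPochInf x q else 0 := by
  simp only [tsum_tripleTerm hq0 (one_sub_mul_pow_self_ne_zero hq),
    diagonalCoeff_add_add hq0 ha haq, tsum_mul_left,
    tsum_diagonal_terminatingPhi hq0 hq hx1 hx hsp]
  split_ifs with hp
  · rw [hp, ← diagonalCoeff_zero_right_div]
    ring
  · rw [mul_zero]

lemma tsum_eq_tsum_int_tsum_diagonal {f : ℕ → ℕ → ℕ → ℂ}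
    (hf : Summable fun t : ℕ × ℕ × ℕ => f t.1 t.2.1 t.2.2) :
    ∑' t : ℕ × ℕ × ℕ, f t.1 t.2.1 t.2.2 =
      ∑' n : ℤ, ∑' l, ∑' k, f (l + n.toNat) (l + (-n).toNat) k := by
  have hassoc := (Equiv.prodAssoc ℕ ℕ ℕ).summable_iff.2 hf
  have hpairs := diagonalEquiv.summable_iff.2 hassoc.prod
  calc ∑' t : ℕ × ℕ × ℕ, f t.1 t.2.1 t.2.2
      = ∑' t : (ℕ × ℕ) × ℕ, f t.1.1 t.1.2 t.2 :=
        ((Equiv.prodAssoc ℕ ℕ ℕ).tsum_eq fun t : ℕ × ℕ × ℕ => f t.1 t.2.1 t.2.2).symm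
    _ = ∑' d : ℕ × ℕ, ∑' k, f d.1 d.2 k := hassoc.tsum_prod
    _ = ∑' c : ℤ × ℕ, ∑' k, f (c.2 + c.1.toNat) (c.2 + (-c.1).toNat) k :=
        (diagonalEquiv.tsum_eq fun d => ∑' k, f d.1 d.2 k).symm
    _ = ∑' n : ℤ, ∑' l, ∑' k, f (l + n.toNat) (l + (-n).toNat) k := hpairs.tsum_prod

theorem tsum_tripleTerm_eq {a x : ℂ} (hq0 : q ≠ 0) (hq : ‖q‖ < 1) (ha : a ≠ 0)
    (haq : ∀ m : ℤ, a ≠ q ^ m) (hx : ∀ k : ℕ, 1 - x * q ^ k ≠ 0)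
    (hs : Summable fun t : ℕ × ℕ × ℕ => tripleTerm q a x t.1 t.2.1 t.2.2) :
    ∑' t : ℕ × ℕ × ℕ, tripleTerm q a x t.1 t.2.1 t.2.2 =
      phiOneOne a (-q) q / qPochInf x q := by
  have hx1 := norm_lt_one_of_summable_tripleTerm hq0 hq ha haq hs
  rw [tsum_eq_tsum_int_tsum_diagonal hs, tsum_congr fun n : ℤ =>
    tsum_diagonal_tripleTerm hq0 hq ha haq hx1 hx (s := n.toNat) (p := (-n).toNat) (by omega),
    ← (Nat.cast_injective (R := ℤ)).tsum_eq, phiOneOne, ← tsum_div_const]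
  · simp
  · intro n hn
    have hneg : (-n).toNat = 0 := by
      by_contra hne
      exact hn (if_neg hne)
    exact ⟨n.toNat, by omega⟩

end TripleSeries

theorem stmt15 (q : ℂ) (hq0 : 0 < ‖q‖) (hq1 : ‖q‖ < 1)
    (a x : ℂ) (ha : a ≠ 0) (haq : ∀ m : ℤ, a ≠ q ^ m)
    (hx : ∀ m : ℕ, x ≠ q ^ (-(m : ℤ)))
    (h1 : Summable (fun p : ℕ × ℕ × ℕ =>
      ‖qPoch a q p.1 * qPoch (q ^ (-(p.2.1 : ℤ))) q p.2.2 *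
        q ^ ((p.1 : ℤ) * (p.2.2 : ℤ) + (p.2.1 : ℤ) * (p.2.2 : ℤ) +
          (p.1 : ℤ) * ((p.1 : ℤ) + 1) / 2 + (p.2.1 : ℤ) ^ 2 -
          2 * (p.1 : ℤ) * (p.2.1 : ℤ)) *
        (-x / a) ^ p.2.1 /
        (qPoch q q p.1 * qPoch q q p.2.1 *
          qPoch (q ^ ((1 : ℤ) - (p.1 : ℤ)) / a) q p.2.1 *
          qPoch q q p.2.2 * qPoch x q p.2.2)‖)) :
    ∑' p : ℕ × ℕ × ℕ,
      qPoch a q p.1 * qPoch (q ^ (-(p.2.1 : ℤ))) q p.2.2 *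
        q ^ ((p.1 : ℤ) * (p.2.2 : ℤ) + (p.2.1 : ℤ) * (p.2.2 : ℤ) +
          (p.1 : ℤ) * ((p.1 : ℤ) + 1) / 2 + (p.2.1 : ℤ) ^ 2 -
          2 * (p.1 : ℤ) * (p.2.1 : ℤ)) *
        (-x / a) ^ p.2.1 /
        (qPoch q q p.1 * qPoch q q p.2.1 *
          qPoch (q ^ ((1 : ℤ) - (p.1 : ℤ)) / a) q p.2.1 *
          qPoch q q p.2.2 * qPoch x q p.2.2)
    = qPochInf (-q) q * qPochInf (a * q) (q ^ 2) / qPochInf x q := by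
  have hq : q ≠ 0 := norm_pos_iff.1 hq0
  have hx' (k : ℕ) : 1 - x * q ^ k ≠ 0 := fun h => hx k <| by
    rw [zpow_neg, zpow_natCast]
    exact eq_inv_of_mul_eq_one_left (sub_eq_zero.1 h).symm
  rw [← phiOneOne_neg_self hq1]
  exact tsum_tripleTerm_eq hq hq1 ha haq hx' h1.of_norm
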